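/- Let D be a connected Eulerian digraph that is not a single directed cycle. For a partition a = {A₁, …, A_k} of E(D), let F(a) = (−1)^k ∏_{i=1}^k |𝔠(A_i)|, where |𝔠(A)| is the number of Eulerian circuits of the subdigraph with edge set A (zero unless A induces a connected Eulerian digraph). Then ∑_{a ∈ Π(E(D))} F(a) = 0, where the sum is over all partitions of E(D). -/

import Mathlib

/-- `l` is a nonempty closed directed trail in the digraph with edge type `E` and
endpoint maps `src`, `tgt`: the edges are distinct and consecutive (cyclically). -/
def IsClosedTrail {V E : Type*} (src tgt : E → V) (l : List E) : Prop :=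
  l ≠ [] ∧ l.Nodup ∧ List.Chain' (fun e f => tgt e = src f) l ∧
  ∀ h : l ≠ [], tgt (l.getLast h) = src (l.head h)

/-- `l` is an Eulerian closed trail of the subdigraph with edge set `A`. -/
def IsEulerianOn {V E : Type*} (src tgt : E → V) (A : Set E) (l : List E) : Prop :=
  IsClosedTrail src tgt l ∧ ∀ e, e ∈ l ↔ e ∈ A

/-- The edge set `A` is the edge set of a (connected) Eulerian subdigraph. -/
def IsEulerianSet {V E : Type*} (src tgt : E → V) (A : Set E) : Prop :=
  ∃ l, IsEulerianOn src tgt A l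

/-- The number of Eulerian circuits of the subdigraph with edge set `A`: Eulerian closed
trails up to cyclic rotation of the edges. -/
noncomputable def numEC {V E : Type*} (src tgt : E → V) (A : Set E) : ℕ :=
  Nat.card (Quot fun l₁ l₂ : {l : List E // IsEulerianOn src tgt A l} =>
    ∃ m, (l₂ : List E) = (l₁ : List E).rotate m)

/-- The edge set `A` is the edge set of a directed cycle (an Eulerian closed trail with
no repeated vertices). -/
def IsCycleSet {V E : Type*} (src tgt : E → V) (A : Set E) : Prop :=
  ∃ l, IsEulerianOn src tgt A l ∧ (l.map src).Nodup

/-- The partition (setoid) `s` of the edge set partitions it into blocks each of which is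
the edge set of a connected Eulerian subdigraph; these are the elements of `T(D)`. -/
def EulerianPartition {V E : Type*} (src tgt : E → V) (s : Setoid E) : Prop :=
  ∀ x : E, IsEulerianSet src tgt {y | s.r x y}

/-!
Recording the successor of each edge turns an Eulerian circuit into a cyclic permutation of its
edges, so the choices of one Eulerian circuit in every block of a partition `a` correspond to the
permutations `σ` of `E` with `tgt e = src (σ e)` for all `e` whose orbit partition is `a`. Since
`(-1) ^ #orbits = (-1) ^ |E| * sign σ`, the sum is the Leibniz expansion of `det (-M)`, where `M` is
the adjacency matrix of the line digraph. If `D` is not a directed cycle, two edges share their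
source, so `M` has two equal columns.
-/

open Equiv.Perm
open Function (Injective Surjective fixedPoints not_injective_iff)
open Equiv (Perm)

section CyclicPermutations

variable {E : Type*} {σ τ : Perm E} {A : Set E}

theorem isCycleOn_iff_of_eqOn (h : Set.EqOn σ τ A) : σ.IsCycleOn A ↔ τ.IsCycleOn A := by
  suffices key : ∀ {σ τ : Perm E}, Set.EqOn σ τ A → σ.IsCycleOn A → τ.IsCycleOn A from
    ⟨key h, key h.symm⟩
  intro σ τ h hσ
  have hbij : Set.BijOn τ A A := hσ.1.congr h
  have hσA : ∀ e, σ e ∈ A ↔ e ∈ A := fun e => hσ.apply_mem_iff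
  have hτA : ∀ e, τ e ∈ A ↔ e ∈ A := fun e =>
    ⟨fun he => by simpa using hbij.perm_inv.mapsTo he, fun he => hbij.mapsTo he⟩
  have hsub : σ.subtypePerm hσA = τ.subtypePerm hτA := Equiv.ext fun e => Subtype.ext (h e.2)
  refine ⟨hbij, fun x hx y hy => ?_⟩
  have hxy : (τ.subtypePerm hτA).SameCycle ⟨x, hx⟩ ⟨y, hy⟩ := hsub ▸ (hσ.2 hx hy).subtypePerm
  exact sameCycle_subtypePerm.1 hxy

theorem exists_formPerm_eq [Finite E] [DecidableEq E] (hσ : σ.IsCycleOn A) (hA : A.Nonempty)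
    (hfix : ∀ e ∉ A, σ e = e) :
    ∃ l : List E, l.Nodup ∧ (∀ e, e ∈ l ↔ e ∈ A) ∧ l.formPerm = σ := by
  have := Fintype.ofFinite E
  obtain ⟨x, hx⟩ := hA
  rcases A.subsingleton_or_nontrivial with hsub | hnt
  · obtain rfl : A = {x} := hsub.eq_singleton_of_mem hx
    refine ⟨[x], List.nodup_singleton x, fun e => List.mem_singleton, ?_⟩
    rw [List.formPerm_singleton]
    ext e
    by_cases he : e = x
    · rw [he, isCycleOn_singleton.1 hσ, one_apply]
    · exact (hfix e he).symm
  · have hcycle : σ.IsCycle := isCycle_iff_exists_isCycleOn.2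
      ⟨A, hnt, hσ, fun e he => by_contra fun heA => he (hfix e heA)⟩
    have hmoved : ∀ e, σ e ≠ e ↔ e ∈ A :=
      fun e => ⟨fun he => by_contra fun heA => he (hfix e heA), hσ.apply_ne hnt⟩
    refine ⟨σ.toList x, nodup_toList σ x, fun e => ?_, ?_⟩
    · rw [mem_toList_iff, mem_support, hmoved]
      exact ⟨fun h => (hmoved e).1 fun he => (hmoved x).2 hx (h.1.apply_eq_self_iff.2 he),
        fun he => ⟨hσ.2 hx he, hx⟩⟩
    · rw [formPerm_toList, hcycle.cycleOf_eq ((hmoved x).2 hx)]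

end CyclicPermutations

section Orbits

theorem sameCycle_setoid_eq_iff {E : Type*} {σ : Perm E} {a : Setoid E} :
    SameCycle.setoid σ = a ↔ ∀ q : Quotient a, σ.IsCycleOn {e | Quotient.mk a e = q} := by
  constructor
  · rintro rfl q
    have hblock : ∀ e, Quotient.mk (SameCycle.setoid σ) (σ e) = Quotient.mk _ e :=
      fun e => Quotient.sound (sameCycle_apply_left.2 (SameCycle.refl σ e))
    refine ⟨⟨fun e he => (hblock e).trans he, σ.injective.injOn, fun e he => ?_⟩,
      fun x hx y hy => Quotient.exact (Eq.trans hx (Eq.symm hy))⟩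
    refine ⟨σ.symm e, (hblock (σ.symm e)).symm.trans ?_, σ.apply_symm_apply e⟩
    rwa [σ.apply_symm_apply]
  · intro h
    refine Setoid.ext fun x y => ⟨fun hxy => ?_, fun hxy => ?_⟩
    · obtain ⟨n, rfl⟩ := hxy
      exact Quotient.exact (((h (Quotient.mk a x)).1.perm_zpow n).mapsTo rfl).symm
    · exact (h (Quotient.mk a x)).2 rfl (Quotient.sound (a.symm hxy))

theorem card_quotient_sameCycle {E : Type*} [Fintype E] [DecidableEq E] (σ : Perm E) :
    Nat.card (Quotient (SameCycle.setoid σ)) =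
      Multiset.card σ.cycleType + Fintype.card (fixedPoints σ) := by
  let orbit : E → σ.cycleFactorsFinset ⊕ fixedPoints σ := fun x =>
    if h : σ x = x then .inr ⟨x, h⟩
    else .inl ⟨σ.cycleOf x, cycleOf_mem_cycleFactorsFinset_iff.2 (mem_support.2 h)⟩
  have orbit_fixed : ∀ {x} (h : σ x = x), orbit x = .inr ⟨x, h⟩ := fun h => dif_pos h
  have orbit_moved : ∀ {x} (h : σ x ≠ x), orbit x = .inl ⟨σ.cycleOf x, _⟩ := fun h => dif_neg h
  have hker : SameCycle.setoid σ = Setoid.ker orbit := by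
    refine Setoid.ext fun x y => ?_
    change SameCycle σ x y ↔ orbit x = orbit y
    by_cases hx : σ x = x <;> by_cases hy : σ y = y
    · rw [orbit_fixed hx, orbit_fixed hy, Sum.inr.injEq, Subtype.ext_iff]
      exact ⟨fun h => h.eq_of_left hx, by rintro rfl; exact SameCycle.refl σ x⟩
    · rw [orbit_fixed hx, orbit_moved hy]
      exact iff_of_false (fun h => hy (h.apply_eq_self_iff.1 hx)) Sum.inr_ne_inl
    · rw [orbit_moved hx, orbit_fixed hy]
      exact iff_of_false (fun h => hx (h.apply_eq_self_iff.2 hy)) Sum.inl_ne_inr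
    · rw [orbit_moved hx, orbit_moved hy, Sum.inl.injEq, Subtype.mk.injEq]
      exact sameCycle_iff_cycleOf_eq_of_mem_support (mem_support.2 hx) (mem_support.2 hy)
  have hsurj : Surjective orbit := by
    rintro (⟨c, hc⟩ | ⟨x, hx⟩)
    · obtain ⟨x, hx⟩ := (mem_cycleFactorsFinset_iff.1 hc).1.nonempty_support
      refine ⟨x, ?_⟩
      simp only [orbit_moved (mem_support.1 (mem_cycleFactorsFinset_support_le hc hx)),
        cycle_is_cycleOf hx hc]
    · exact ⟨x, orbit_fixed hx⟩
  rw [hker, Nat.card_congr (Setoid.quotientKerEquivOfSurjective orbit hsurj), Nat.card_sum,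
    Nat.card_eq_fintype_card, Nat.card_eq_fintype_card, Fintype.card_coe, cycleType_def,
    Multiset.card_map, Finset.card_val]

theorem neg_one_pow_card_quotient_sameCycle {E : Type*} [Fintype E] [DecidableEq E] (σ : Perm E) :
    (-1 : ℤ) ^ Nat.card (Quotient (SameCycle.setoid σ)) =
      (-1) ^ Fintype.card E * (sign σ : ℤ) := by
  have hcard : Fintype.card E = Fintype.card (fixedPoints σ) + σ.cycleType.sum := by
    rw [card_fixedPoints, Nat.sub_add_cancel σ.sum_cycleType_le]
  have hsq : ((-1 : ℤ) ^ σ.cycleType.sum) * (-1) ^ σ.cycleType.sum = 1 := by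
    rw [← mul_pow, neg_one_mul, neg_neg, one_pow]
  rw [card_quotient_sameCycle, hcard, sign_of_cycleType]
  push_cast
  rw [pow_add, pow_add, pow_add]
  linear_combination (-(-1 : ℤ) ^ Multiset.card σ.cycleType *
    (-1) ^ Fintype.card (fixedPoints σ)) * hsq

end Orbits

section Trails

variable {V E : Type*} {src tgt : E → V}

theorem isClosedTrail_iff_formPerm [DecidableEq E] {l : List E} (hne : l ≠ []) (hnd : l.Nodup) :
    IsClosedTrail src tgt l ↔ ∀ e ∈ l, tgt e = src (l.formPerm e) := by
  have hpos : 0 < l.length := List.length_pos_iff.2 hne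
  have hclosed : (∀ h : l ≠ [], tgt (l.getLast h) = src (l.head h)) ↔
      tgt l[l.length - 1] = src l[0] := by
    rw [forall_prop_of_true hne, List.getLast_eq_getElem, List.head_eq_getElem]
  have htrail : IsClosedTrail src tgt l ↔ l ≠ [] ∧ l.Nodup ∧
      (∀ i, (hi : i + 1 < l.length) → tgt l[i] = src l[i + 1]) ∧
      tgt l[l.length - 1] = src l[0] :=
    and_congr_right' <| and_congr_right' <| and_congr List.isChain_iff_getElem hclosed
  rw [htrail, List.forall_mem_iff_getElem]
  simp only [List.formPerm_apply_getElem _ hnd]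
  constructor
  · rintro ⟨-, -, hstep, hlast⟩ i hi
    rcases Nat.lt_or_ge (i + 1) l.length with hlt | hge
    · simpa only [Nat.mod_eq_of_lt hlt] using hstep i hlt
    · obtain rfl : i = l.length - 1 := by omega
      simpa only [Nat.sub_add_cancel hpos, Nat.mod_self] using hlast
  · refine fun h => ⟨hne, hnd, fun i hi => ?_, ?_⟩
    · simpa only [Nat.mod_eq_of_lt hi] using h i (by omega)
    · simpa only [Nat.sub_add_cancel hpos, Nat.mod_self] using h (l.length - 1) (by omega)

theorem formPerm_eq_iff_exists_rotate [DecidableEq E] {l₁ l₂ : List E} (h₁ : l₁.Nodup)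
    (h₂ : l₂.Nodup) (hmem : ∀ e, e ∈ l₁ ↔ e ∈ l₂) :
    l₁.formPerm = l₂.formPerm ↔ ∃ m, l₂ = l₁.rotate m := by
  have hperm : l₁.Perm l₂ := (List.perm_ext_iff_of_nodup h₁ h₂).2 hmem
  constructor
  · intro h
    rcases (List.formPerm_eq_formPerm_iff h₁ h₂).1 h with ⟨m, hm⟩ | ⟨hshort, -⟩
    · exact ⟨m, hm.symm⟩
    · refine ⟨0, ?_⟩
      rw [List.rotate_zero]
      match l₁, hshort with
      | [], _ => exact hperm.nil_eq.symm
      | [e], _ => exact (List.singleton_perm.1 hperm).symm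
  · rintro ⟨m, rfl⟩
    exact (List.formPerm_rotate l₁ h₁ m).symm

theorem IsEulerianSet.isCycleSet {A : Set E} (hA : IsEulerianSet src tgt A)
    (hsrc : Set.InjOn src A) : IsCycleSet src tgt A := by
  obtain ⟨l, hl⟩ := hA
  exact ⟨l, hl, hl.1.2.1.map_on fun e he f hf => hsrc ((hl.2 e).1 he) ((hl.2 f).1 hf)⟩

/-- An Eulerian circuit of the subdigraph with edge set `A`, encoded as a permutation of all edges:
it carries each edge of `A` to the next one along the circuit and fixes the edges outside `A`. -/
structure IsCircuitPerm (src tgt : E → V) (A : Set E) (σ : Perm E) : Prop where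
  isCycleOn : σ.IsCycleOn A
  tgt_eq : ∀ e ∈ A, tgt e = src (σ e)
  apply_eq_self : ∀ e ∉ A, σ e = e

theorem IsEulerianOn.isCircuitPerm_formPerm [DecidableEq E] {A : Set E} {l : List E}
    (hl : IsEulerianOn src tgt A l) : IsCircuitPerm src tgt A l.formPerm := by
  obtain ⟨htrail, hmem⟩ := hl
  obtain rfl : {e | e ∈ l} = A := Set.ext hmem
  exact ⟨htrail.2.1.isCycleOn_formPerm,
    (isClosedTrail_iff_formPerm htrail.1 htrail.2.1).1 htrail,
    fun e he => List.formPerm_apply_of_notMem he⟩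

theorem IsCircuitPerm.exists_isEulerianOn [Finite E] [DecidableEq E] {A : Set E} {σ : Perm E}
    (hσ : IsCircuitPerm src tgt A σ) (hA : A.Nonempty) :
    ∃ l, IsEulerianOn src tgt A l ∧ l.formPerm = σ := by
  obtain ⟨l, hnd, hmem, rfl⟩ := exists_formPerm_eq hσ.isCycleOn hA hσ.apply_eq_self
  obtain ⟨e, he⟩ := hA
  have hne : l ≠ [] := List.ne_nil_of_mem ((hmem e).2 he)
  refine ⟨l, ⟨(isClosedTrail_iff_formPerm hne hnd).2 fun e he => ?_, hmem⟩, rfl⟩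
  exact hσ.tgt_eq e ((hmem e).1 he)

theorem numEC_eq_card_isCircuitPerm [Finite E] {A : Set E} (hA : A.Nonempty) :
    numEC src tgt A = Nat.card {σ : Perm E // IsCircuitPerm src tgt A σ} := by
  classical
  have hrot : ∀ l₁ l₂ : {l // IsEulerianOn src tgt A l},
      (l₁ : List E).formPerm = (l₂ : List E).formPerm ↔
        ∃ m, (l₂ : List E) = (l₁ : List E).rotate m :=
    fun l₁ l₂ => formPerm_eq_iff_exists_rotate l₁.2.1.2.1 l₂.2.1.2.1
      fun e => (l₁.2.2 e).trans (l₂.2.2 e).symm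
  refine Nat.card_eq_of_bijective
    (Quot.lift (fun l => ⟨(l : List E).formPerm, l.2.isCircuitPerm_formPerm⟩)
      fun l₁ l₂ h => Subtype.ext ((hrot l₁ l₂).2 h)) ⟨?_, ?_⟩
  · rintro ⟨l₁⟩ ⟨l₂⟩ h
    exact Quot.sound ((hrot l₁ l₂).1 (congrArg Subtype.val h))
  · rintro ⟨σ, hσ⟩
    obtain ⟨l, hl, hlσ⟩ := hσ.exists_isEulerianOn hA
    exact ⟨Quot.mk _ ⟨l, hl⟩, Subtype.ext hlσ⟩

end Trails

section Gluing

open scoped Classical in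
/-- The restriction of `σ` to the invariant set `A`, extended by the identity outside `A`. -/
noncomputable def restrictPerm {E : Type*} (σ : Perm E) {A : Set E}
    (hA : ∀ e, σ e ∈ A ↔ e ∈ A) : Perm E :=
  ofSubtype (σ.subtypePerm hA)

open scoped Classical in
theorem eqOn_restrictPerm {E : Type*} {σ : Perm E} {A : Set E} (hA : ∀ e, σ e ∈ A ↔ e ∈ A) :
    Set.EqOn (restrictPerm σ hA) σ A :=
  fun _ he => ofSubtype_subtypePerm_of_mem hA he

open scoped Classical in
theorem restrictPerm_apply_of_notMem {E : Type*} {σ : Perm E} {A : Set E}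
    (hA : ∀ e, σ e ∈ A ↔ e ∈ A) {e : E} (he : e ∉ A) : restrictPerm σ hA e = e :=
  ofSubtype_subtypePerm_of_not_mem hA he

theorem restrictPerm_eq_of_eqOn {E : Type*} {σ τ : Perm E} {A : Set E}
    (hA : ∀ e, σ e ∈ A ↔ e ∈ A) (h : Set.EqOn σ τ A) (hτ : ∀ e ∉ A, τ e = e) :
    restrictPerm σ hA = τ := by
  ext e
  by_cases he : e ∈ A
  · rw [eqOn_restrictPerm hA he, h he]
  · rw [restrictPerm_apply_of_notMem hA he, hτ e he]

/-- The permutation that acts as `τ i` on the fibre of `p` over each `i`. -/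
def gluePerm {E ι : Type*} (p : E → ι) (τ : ι → Perm E) (hτ : ∀ i e, p (τ i e) = i ↔ p e = i) :
    Perm E where
  toFun e := τ (p e) e
  invFun e := (τ (p e)).symm e
  left_inv e := by
    have hp : p (τ (p e) e) = p e := (hτ _ _).2 rfl
    simp only [hp, Equiv.symm_apply_apply]
  right_inv e := by
    have hp : p ((τ (p e)).symm e) = p e := (hτ _ _).1 (by rw [Equiv.apply_symm_apply])
    simp only [hp, Equiv.apply_symm_apply]

theorem eqOn_gluePerm {E ι : Type*} {p : E → ι} {τ : ι → Perm E}
    (hτ : ∀ i e, p (τ i e) = i ↔ p e = i) (i : ι) :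
    Set.EqOn (gluePerm p τ hτ) (τ i) {e | p e = i} := by
  rintro e rfl
  rfl

variable {V E : Type*}

/-- `σ` is a transition system (in the sense of Kotzig): it assigns to each edge an edge leaving its
end, bijectively. -/
def IsTransitionSystem (src tgt : E → V) (σ : Perm E) : Prop := ∀ e, tgt e = src (σ e)

theorem IsTransitionSystem.isCircuitPerm_restrictPerm {src tgt : E → V} {A : Set E}
    {σ : Perm E} (hσ : IsTransitionSystem src tgt σ) (hA : σ.IsCycleOn A) :
    IsCircuitPerm src tgt A (restrictPerm σ fun _ => hA.apply_mem_iff) where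
  isCycleOn := (isCycleOn_iff_of_eqOn (eqOn_restrictPerm _)).2 hA
  tgt_eq e he := by rw [eqOn_restrictPerm _ he, hσ e]
  apply_eq_self _ he := restrictPerm_apply_of_notMem _ he

/-- Choosing an Eulerian circuit in every block of `a` amounts to choosing a transition system
whose orbit partition is `a`. -/
noncomputable def transitionSystemEquiv (src tgt : E → V) (a : Setoid E) :
    {σ : Perm E // IsTransitionSystem src tgt σ ∧ SameCycle.setoid σ = a} ≃
      ∀ q : Quotient a, {τ : Perm E // IsCircuitPerm src tgt {e | Quotient.mk a e = q} τ} where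
  toFun σ q := ⟨_, σ.2.1.isCircuitPerm_restrictPerm (sameCycle_setoid_eq_iff.1 σ.2.2 q)⟩
  invFun τ := ⟨gluePerm (Quotient.mk a) (fun q => τ q) fun q _ => (τ q).2.isCycleOn.apply_mem_iff,
    fun e => (τ _).2.tgt_eq e rfl,
    sameCycle_setoid_eq_iff.2 fun q =>
      (isCycleOn_iff_of_eqOn (eqOn_gluePerm _ q)).2 (τ q).2.isCycleOn⟩
  left_inv _ := Subtype.ext <| Equiv.ext fun e =>
    eqOn_restrictPerm (A := {f | Quotient.mk a f = Quotient.mk a e}) _ rfl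
  right_inv τ := funext fun q => Subtype.ext <|
    restrictPerm_eq_of_eqOn _ (eqOn_gluePerm (fun q _ => (τ q).2.isCycleOn.apply_mem_iff) q)
      (τ q).2.apply_eq_self

theorem finprod_numEC [Finite E] (src tgt : E → V) (a : Setoid E) :
    ∏ᶠ q : Quotient a, (numEC src tgt {e | Quotient.mk a e = q} : ℤ) =
      Nat.card {σ : Perm E // IsTransitionSystem src tgt σ ∧ SameCycle.setoid σ = a} := by
  have := Fintype.ofFinite (Quotient a)
  rw [finprod_eq_prod_of_fintype, Nat.card_congr (transitionSystemEquiv src tgt a), Nat.card_pi,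
    Nat.cast_prod]
  exact Finset.prod_congr rfl fun q _ =>
    congrArg Nat.cast (numEC_eq_card_isCircuitPerm (Quotient.exists_rep q))

end Gluing

section Determinant

variable {V E : Type*} [Fintype E] [DecidableEq E] [DecidableEq V]

/-- The adjacency matrix of the line digraph: `f` follows `e` when `e` ends where `f` starts. -/
def lineDigraphMatrix (src tgt : E → V) : Matrix E E ℤ :=
  Matrix.of fun e f => if tgt e = src f then 1 else 0

instance (src tgt : E → V) : DecidablePred (IsTransitionSystem src tgt) :=
  fun _ => inferInstanceAs (Decidable (∀ _, _))

theorem det_lineDigraphMatrix (src tgt : E → V) :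
    (lineDigraphMatrix src tgt).det = ∑ σ with IsTransitionSystem src tgt σ, (sign σ : ℤ) := by
  rw [← Matrix.det_transpose, Matrix.det_apply', Finset.sum_filter]
  refine Finset.sum_congr rfl fun σ _ => ?_
  simp only [lineDigraphMatrix, Matrix.transpose_apply, Matrix.of_apply, Fintype.prod_boole,
    mul_ite, mul_one, mul_zero]
  rfl

theorem det_lineDigraphMatrix_eq_zero {src tgt : E → V} (hsrc : ¬ Injective src) :
    (lineDigraphMatrix src tgt).det = 0 := by
  obtain ⟨f, g, hfg, hne⟩ := not_injective_iff.1 hsrc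
  exact Matrix.det_zero_of_column_eq hne fun e => by
    simp only [lineDigraphMatrix, Matrix.of_apply, hfg]

theorem neg_one_pow_mul_finprod_numEC [DecidableEq (Setoid E)] (src tgt : E → V) (a : Setoid E) :
    (-1 : ℤ) ^ Nat.card (Quotient a) *
        ∏ᶠ q : Quotient a, (numEC src tgt {e | Quotient.mk a e = q} : ℤ) =
      ∑ σ with IsTransitionSystem src tgt σ ∧ SameCycle.setoid σ = a,
        (-1) ^ Fintype.card E * (sign σ : ℤ) := by
  have hsign : ∀ σ ∈ Finset.univ.filter fun σ : Perm E =>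
      IsTransitionSystem src tgt σ ∧ SameCycle.setoid σ = a,
      (-1) ^ Fintype.card E * (sign σ : ℤ) = (-1) ^ Nat.card (Quotient a) := by
    intro σ hσ
    rw [← neg_one_pow_card_quotient_sameCycle, (Finset.mem_filter.1 hσ).2.2]
  rw [Finset.sum_eq_card_nsmul hsign, finprod_numEC, nsmul_eq_mul, mul_comm,
    Nat.card_eq_fintype_card, Fintype.card_subtype]

theorem finite_setoid (E : Type*) [Finite E] : Finite (Setoid E) :=
  Finite.of_injective (fun a : Setoid E => a.r) fun _ _ h =>
    Setoid.ext fun x y => iff_of_eq (congrFun₂ h x y)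

theorem finsum_neg_one_pow_mul_finprod_numEC (src tgt : E → V) :
    ∑ᶠ a : Setoid E, (-1 : ℤ) ^ Nat.card (Quotient a) *
        ∏ᶠ q : Quotient a, (numEC src tgt {e | Quotient.mk a e = q} : ℤ) =
      (-lineDigraphMatrix src tgt).det := by
  classical
  have := finite_setoid E
  have := Fintype.ofFinite (Setoid E)
  rw [finsum_eq_sum_of_fintype]
  calc
    _ = ∑ a : Setoid E, ∑ σ with IsTransitionSystem src tgt σ ∧ SameCycle.setoid σ = a,
          (-1) ^ Fintype.card E * (sign σ : ℤ) :=
      Finset.sum_congr rfl fun a _ => neg_one_pow_mul_finprod_numEC src tgt a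
    _ = ∑ σ with IsTransitionSystem src tgt σ, (-1) ^ Fintype.card E * (sign σ : ℤ) := by
      simp only [← Finset.filter_filter]
      exact Finset.sum_fiberwise _ _ _
    _ = (-lineDigraphMatrix src tgt).det := by
      rw [← Finset.mul_sum, ← det_lineDigraphMatrix, Matrix.det_neg]

end Determinant

theorem sum_F_eq_zero_general {V E : Type*} [Finite E] (src tgt : E → V)
    (hsrc : ¬ Injective src) :
    ∑ᶠ a : Setoid E, (-1 : ℤ) ^ Nat.card (Quotient a) *
        ∏ᶠ q : Quotient a, (numEC src tgt {e | Quotient.mk a e = q} : ℤ) = 0 := by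
  classical
  have := Fintype.ofFinite E
  rw [finsum_neg_one_pow_mul_finprod_numEC, Matrix.det_neg, det_lineDigraphMatrix_eq_zero hsrc,
    mul_zero]

/-- For a connected Eulerian digraph `D` that is not a single directed cycle, the sum of
`F(a) = (−1)^{|a|} ∏_{blocks A of a} |𝔠(A)|` over all partitions `a` of `E(D)` is zero,
where `|𝔠(A)|` is the number of Eulerian circuits of the subdigraph with edge set `A`
(zero unless `A` is the edge set of a connected Eulerian subdigraph). -/
theorem sum_F_eq_zero {V E : Type*} [Fintype V] [Fintype E]
    (src tgt : E → V) (hD : IsEulerianSet src tgt Set.univ)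
    (hnc : ¬ IsCycleSet src tgt Set.univ) :
    (∑ᶠ a : Setoid E, (-1 : ℤ) ^ Nat.card (Quotient a) *
        ∏ᶠ q : Quotient a, (numEC src tgt {e | Quotient.mk a e = q} : ℤ)) = 0 :=
  sum_F_eq_zero_general src tgt fun hsrc => hnc (hD.isCycleSet hsrc.injOn)
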